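/- (Proposition: convergence bound for integer influences) Suppose the influence b and all edge weights w_e are positive integers. Then every sequence of asynchronous improvement steps of the opinion game on a graph with n vertices has length at most (4bn + 4·w_max·n²)/δ², where w_max = max_{e∈E} w_e; hence the opinion dynamics with asynchronous updates converges to a Nash equilibrium within that many steps. -/

import Mathlib

open Finset

/-- The recommendation function with threshold λ = 1/2. -/
noncomputable def sRec (x : ℝ) : ℝ :=
  if x < -(1/2 : ℝ) then -1 else if (1/2 : ℝ) < x then 1 else 0

/-- Membership in the opinion grid Θ = {-1, -1+δ, …, 1-δ, 1}. -/
def inGrid (δ x : ℝ) : Prop := |x| ≤ 1 ∧ ∃ k : ℤ, x = k * δ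

/-- Cost to agent `i` of holding opinion `y` when the current profile is `x`.
Non-edges are modelled by weight `0`. -/
noncomputable def cost {n : ℕ} (b : ℝ) (w : Fin n → Fin n → ℝ) (i : Fin n)
    (y : ℝ) (x : Fin n → ℝ) : ℝ :=
  b * (y - sRec (x i)) ^ 2 + ∑ j, w i j * (y - x j) ^ 2

/-- An asynchronous improvement step: a single agent `i` switches to an opinion
`y ∈ Θ` that strictly decreases her cost. -/
def ImprStep {n : ℕ} (δ b : ℝ) (w : Fin n → Fin n → ℝ) (x x' : Fin n → ℝ) : Prop :=
  ∃ i y, inGrid δ y ∧ cost b w i y x < cost b w i (x i) x ∧ x' = Function.update x i y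

/-- A profile is a Nash equilibrium (stable) if every agent's opinion minimizes
her cost over Θ. -/
def NashEq {n : ℕ} (δ b : ℝ) (w : Fin n → Fin n → ℝ) (x : Fin n → ℝ) : Prop :=
  ∀ i y, inGrid δ y → cost b w i (x i) x ≤ cost b w i y x

/-! Each agent's recommendation is the point of `{-1, 0, 1}` nearest to her opinion, so
re-evaluating it after a move cannot raise her cost. Hence the potential, the sum of all
recommendation terms and of all edge terms counted once, falls at every improvement step by at least
as much as the mover's cost. On the grid, costs are integer multiples of `ε * δ ^ 2` when `b` and
the weights are integer multiples of `ε`, so each step lowers the potential by at least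
`ε * δ ^ 2`. -/

lemma add_nsmul_le_of_forall_add_le {M : Type*} [AddCommMonoid M] [Preorder M]
    [IsOrderedAddMonoid M] {φ : ℕ → M} {η : M} {T : ℕ} (h : ∀ t < T, φ (t + 1) + η ≤ φ t) :
    φ T + T • η ≤ φ 0 := by
  induction T with
  | zero => simp
  | succ T ih =>
    calc φ (T + 1) + (T + 1) • η
        = φ (T + 1) + η + T • η := by rw [succ_nsmul', add_assoc]
      _ ≤ φ T + T • η := by
        gcongr
        exact h T T.lt_succ_self
      _ ≤ φ 0 := ih fun t ht => h t (ht.trans T.lt_succ_self)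

-- A longest sequence must end in a terminal point, since otherwise it could be prolonged.
lemma exists_seq_to_terminal_of_bddAbove {α : Type*} {r : α → α → Prop} {x₀ : α}
    (hbdd : BddAbove {T : ℕ | ∃ seq : ℕ → α, seq 0 = x₀ ∧ ∀ t < T, r (seq t) (seq (t + 1))}) :
    ∃ (T : ℕ) (seq : ℕ → α), seq 0 = x₀ ∧ (∀ t < T, r (seq t) (seq (t + 1))) ∧
      ∀ y, ¬ r (seq T) y := by
  obtain ⟨T, ⟨seq, hstart, hstep⟩, hmax⟩ :=
    hbdd.exists_isGreatest_of_nonempty ⟨0, fun _ => x₀, rfl, by simp⟩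
  refine ⟨T, seq, hstart, hstep, fun y hy => T.not_succ_le_self (hmax ?_)⟩
  refine ⟨Function.update seq (T + 1) y, by simp [hstart], fun t ht => ?_⟩
  rcases Nat.lt_succ_iff_lt_or_eq.mp ht with hlt | rfl
  · simpa [hlt.ne, (hlt.trans T.lt_succ_self).ne] using hstep t hlt
  · simpa using hy

lemma mul_mem_zmultiples_mul {R : Type*} [NonUnitalNonAssocRing R] {a c u v : R}
    (ha : a ∈ AddSubgroup.zmultiples u) (hc : c ∈ AddSubgroup.zmultiples v) :
    a * c ∈ AddSubgroup.zmultiples (u * v) := by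
  obtain ⟨k, rfl⟩ := ha
  obtain ⟨l, rfl⟩ := hc
  exact ⟨k * l, (smul_mul_smul_comm k u l v).symm⟩

lemma add_le_of_lt_of_mem_zmultiples {G : Type*} [AddCommGroup G] [LinearOrder G]
    [IsOrderedAddMonoid G] {a c u : G} (hu : 0 < u) (ha : a ∈ AddSubgroup.zmultiples u)
    (hc : c ∈ AddSubgroup.zmultiples u) (hac : a < c) : a + u ≤ c := by
  obtain ⟨k, rfl⟩ := ha
  obtain ⟨l, rfl⟩ := hc
  have hkl : k + 1 ≤ l := (zsmul_lt_zsmul_iff_left hu).mp hac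
  simpa only [add_zsmul, one_zsmul] using zsmul_le_zsmul_left hu.le hkl

lemma sq_sub_le_four {R : Type*} [CommRing R] [LinearOrder R] [IsStrictOrderedRing R] {u v : R}
    (hu : |u| ≤ 1) (hv : |v| ≤ 1) : (u - v) ^ 2 ≤ 4 := by
  have huv : |u - v| ≤ 2 := by linarith [abs_sub u v]
  nlinarith [sq_abs (u - v), abs_nonneg (u - v)]

lemma sum_sum_mul_sq_sub_nonneg {ι R : Type*} [Fintype ι] [Ring R] [LinearOrder R]
    [IsStrictOrderedRing R] {w : ι → ι → R} (hw : ∀ i j, 0 ≤ w i j) (x : ι → R) :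
    0 ≤ ∑ i, ∑ j, w i j * (x i - x j) ^ 2 :=
  sum_nonneg fun i _ => sum_nonneg fun j _ => mul_nonneg (hw i j) (sq_nonneg _)

section Update

variable {ι : Type*} [Fintype ι] [DecidableEq ι]

lemma sum_comp_update_sub_sum {α M : Type*} [AddCommGroup M] (g : α → M) (x : ι → α) (i : ι)
    (y : α) : ∑ a, g (Function.update x i y a) - ∑ a, g (x a) = g y - g (x i) := by
  rw [← sum_sub_distrib, sum_eq_single i (fun a _ ha => by simp [ha]) (by simp),
    Function.update_self]

-- The term `w i i * (y - x i) ^ 2` is subtracted because a self-loop never contributes to the left.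
lemma sum_sum_mul_sq_sub_update {R : Type*} [CommRing R] {w : ι → ι → R}
    (hsym : ∀ i j, w i j = w j i) (x : ι → R) (i : ι) (y : R) :
    ∑ a, ∑ c, w a c * (Function.update x i y a - Function.update x i y c) ^ 2 -
        ∑ a, ∑ c, w a c * (x a - x c) ^ 2 =
      2 * (∑ j, w i j * ((y - x j) ^ 2 - (x i - x j) ^ 2) - w i i * (y - x i) ^ 2) := by
  set x' := Function.update x i y with hx'
  set d : ι → R := fun j => w i j * ((y - x j) ^ 2 - (x i - x j) ^ 2) with hd
  have hterm (a c : ι) : w a c * (x' a - x' c) ^ 2 - w a c * (x a - x c) ^ 2 =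
      (if a = i then d c else 0) + (if c = i then d a else 0) -
        (if a = i then if c = i then 2 * (w i i * (y - x i) ^ 2) else 0 else 0) := by
    by_cases ha : a = i <;> by_cases hc : c = i
    · subst ha hc
      simp [hd, two_mul]
    · subst ha
      simp [hd, hx', hc, mul_sub]
    · subst hc
      simp only [hd, hx', ha, hsym c a, Function.update_self, Function.update_of_ne, ne_eq,
        not_false_eq_true, if_true, if_false]
      ring
    · simp [hx', ha, hc]
  simp only [← sum_sub_distrib, hterm]
  simp only [sum_sub_distrib, sum_add_distrib, sum_ite_irrel, sum_const_zero, sum_ite_eq', mem_univ,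
    if_true]
  ring

end Update

lemma sRec_eq_neg_one_or_zero_or_one (z : ℝ) : sRec z = -1 ∨ sRec z = 0 ∨ sRec z = 1 := by
  unfold sRec
  split_ifs <;> simp

lemma abs_sRec_le_one (z : ℝ) : |sRec z| ≤ 1 := by
  rcases sRec_eq_neg_one_or_zero_or_one z with h | h | h <;> simp [h]

lemma sRec_mem_zmultiples_one (z : ℝ) : sRec z ∈ AddSubgroup.zmultiples (1 : ℝ) := by
  rcases sRec_eq_neg_one_or_zero_or_one z with h | h | h <;> simp [h]

lemma sq_sub_sRec_self_le (y z : ℝ) : (y - sRec y) ^ 2 ≤ (y - sRec z) ^ 2 := by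
  unfold sRec
  split_ifs <;> nlinarith

/-- The potential of the opinion game: all recommendation terms, each taken at the holder's own
opinion, plus all edge terms. The factor `1 / 2` makes each edge count once in the sum over ordered
pairs. -/
noncomputable def potential {n : ℕ} (b : ℝ) (w : Fin n → Fin n → ℝ) (x : Fin n → ℝ) : ℝ :=
  ∑ i, b * (x i - sRec (x i)) ^ 2 + 1 / 2 * ∑ i, ∑ j, w i j * (x i - x j) ^ 2

section Potential

variable {n : ℕ} {b : ℝ} {w : Fin n → Fin n → ℝ}

lemma potential_nonneg (hb : 0 ≤ b) (hw : ∀ i j, 0 ≤ w i j) (x : Fin n → ℝ) :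
    0 ≤ potential b w x := by
  have hpairs := sum_sum_mul_sq_sub_nonneg hw x
  unfold potential
  positivity

lemma potential_le {wmax : ℝ} (hb : 0 ≤ b) (hw : ∀ i j, 0 ≤ w i j) (hub : ∀ i j, w i j ≤ wmax)
    {x : Fin n → ℝ} (hx : ∀ i, |x i| ≤ 1) :
    potential b w x ≤ 4 * b * n + 4 * wmax * n ^ 2 := by
  calc potential b w x
      ≤ ∑ i, b * (x i - sRec (x i)) ^ 2 + ∑ i, ∑ j, w i j * (x i - x j) ^ 2 := by
        unfold potential
        linarith [sum_sum_mul_sq_sub_nonneg hw x]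
    _ ≤ ∑ _i : Fin n, b * 4 + ∑ _i : Fin n, ∑ _j : Fin n, wmax * 4 := by
        gcongr with i _ i _ j _
        · exact sq_sub_le_four (hx i) (abs_sRec_le_one (x i))
        · exact (hw i j).trans (hub i j)
        · exact hub i j
        · exact sq_sub_le_four (hx i) (hx j)
    _ = 4 * b * n + 4 * wmax * n ^ 2 := by
        simp only [sum_const, card_univ, Fintype.card_fin, nsmul_eq_mul]
        ring

lemma potential_update_sub (hsym : ∀ i j, w i j = w j i) (x : Fin n → ℝ) (i : Fin n) (y : ℝ) :
    potential b w (Function.update x i y) - potential b w x =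
      cost b w i y x - cost b w i (x i) x -
        (b * ((y - sRec (x i)) ^ 2 - (y - sRec y) ^ 2) + w i i * (y - x i) ^ 2) := by
  have hrec := sum_comp_update_sub_sum (fun z => b * (z - sRec z) ^ 2) x i y
  have hpairs := sum_sum_mul_sq_sub_update hsym x i y
  simp only [mul_sub, sum_sub_distrib] at hpairs
  unfold potential cost
  linarith

lemma potential_update_sub_le (hb : 0 ≤ b) (hw : ∀ i, 0 ≤ w i i) (hsym : ∀ i j, w i j = w j i)
    (x : Fin n → ℝ) (i : Fin n) (y : ℝ) :
    potential b w (Function.update x i y) - potential b w x ≤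
      cost b w i y x - cost b w i (x i) x := by
  have hrec : 0 ≤ b * ((y - sRec (x i)) ^ 2 - (y - sRec y) ^ 2) :=
    mul_nonneg hb (sub_nonneg.mpr (sq_sub_sRec_self_le y (x i)))
  have hloop : 0 ≤ w i i * (y - x i) ^ 2 := mul_nonneg (hw i) (sq_nonneg _)
  linarith [potential_update_sub (b := b) hsym x i y]

end Potential

section Dynamics

variable {n : ℕ} {δ ε b : ℝ} {w : Fin n → Fin n → ℝ}

lemma nashEq_iff_forall_not_imprStep {x : Fin n → ℝ} :
    NashEq δ b w x ↔ ∀ x', ¬ ImprStep δ b w x x' := by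
  constructor
  · rintro hx _ ⟨i, y, hy, hlt, -⟩
    exact (hx i y hy).not_gt hlt
  · intro hx i y hy
    exact not_lt.mp fun hlt => hx _ ⟨i, y, hy, hlt, rfl⟩

lemma ImprStep.forall_inGrid {x x' : Fin n → ℝ} (h : ImprStep δ b w x x')
    (hx : ∀ i, inGrid δ (x i)) : ∀ i, inGrid δ (x' i) := by
  obtain ⟨i, y, hy, -, rfl⟩ := h
  exact (Function.forall_update_iff x fun _ z => inGrid δ z).mpr ⟨hy, fun j _ => hx j⟩

lemma inGrid.mem_zmultiples {x : ℝ} (hx : inGrid δ x) : x ∈ AddSubgroup.zmultiples δ := by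
  obtain ⟨-, k, rfl⟩ := hx
  exact ⟨k, by simp⟩

lemma cost_mem_zmultiples (hδ : (1 : ℝ) ∈ AddSubgroup.zmultiples δ)
    (hb : b ∈ AddSubgroup.zmultiples ε) (hw : ∀ i j, w i j ∈ AddSubgroup.zmultiples ε)
    {x : Fin n → ℝ} (hx : ∀ i, inGrid δ (x i)) (i : Fin n) {y : ℝ} (hy : inGrid δ y) :
    cost b w i y x ∈ AddSubgroup.zmultiples (ε * δ ^ 2) := by
  have hterm {a z : ℝ} (ha : a ∈ AddSubgroup.zmultiples ε) (hz : z ∈ AddSubgroup.zmultiples δ) :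
      a * (y - z) ^ 2 ∈ AddSubgroup.zmultiples (ε * δ ^ 2) := by
    have hyz := sub_mem hy.mem_zmultiples hz
    simpa only [sq] using mul_mem_zmultiples_mul ha (mul_mem_zmultiples_mul hyz hyz)
  have hrec : sRec (x i) ∈ AddSubgroup.zmultiples δ :=
    AddSubgroup.zmultiples_le_of_mem hδ (sRec_mem_zmultiples_one (x i))
  exact add_mem (hterm hb hrec) (sum_mem fun j _ => hterm (hw i j) (hx j).mem_zmultiples)

lemma ImprStep.potential_add_le (hε : 0 < ε) (hδ : 0 < δ)
    (hδ_one : (1 : ℝ) ∈ AddSubgroup.zmultiples δ) (hb : 0 ≤ b) (hw : ∀ i, 0 ≤ w i i)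
    (hsym : ∀ i j, w i j = w j i) (hbε : b ∈ AddSubgroup.zmultiples ε)
    (hwε : ∀ i j, w i j ∈ AddSubgroup.zmultiples ε) {x x' : Fin n → ℝ}
    (h : ImprStep δ b w x x') (hx : ∀ i, inGrid δ (x i)) :
    potential b w x' + ε * δ ^ 2 ≤ potential b w x := by
  obtain ⟨i, y, hy, hlt, rfl⟩ := h
  have hcost : cost b w i y x + ε * δ ^ 2 ≤ cost b w i (x i) x :=
    add_le_of_lt_of_mem_zmultiples (by positivity) (cost_mem_zmultiples hδ_one hbε hwε hx i hy)
      (cost_mem_zmultiples hδ_one hbε hwε hx i (hx i)) hlt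
  linarith [potential_update_sub_le hb hw hsym x i y]

lemma forall_inGrid_of_forall_imprStep {T : ℕ} {seq : ℕ → Fin n → ℝ}
    (hstart : ∀ i, inGrid δ (seq 0 i))
    (hstep : ∀ t < T, ImprStep δ b w (seq t) (seq (t + 1))) :
    ∀ t ≤ T, ∀ i, inGrid δ (seq t i)
  | 0, _ => hstart
  | t + 1, ht =>
    (hstep t ht).forall_inGrid
      (forall_inGrid_of_forall_imprStep hstart hstep t (t.le_succ.trans ht))

lemma length_le_potential_div (hε : 0 < ε) (hδ : 0 < δ)
    (hδ_one : (1 : ℝ) ∈ AddSubgroup.zmultiples δ) (hb : 0 ≤ b) (hw : ∀ i j, 0 ≤ w i j)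
    (hsym : ∀ i j, w i j = w j i) (hbε : b ∈ AddSubgroup.zmultiples ε)
    (hwε : ∀ i j, w i j ∈ AddSubgroup.zmultiples ε) {T : ℕ} {seq : ℕ → Fin n → ℝ}
    (hstart : ∀ i, inGrid δ (seq 0 i))
    (hstep : ∀ t < T, ImprStep δ b w (seq t) (seq (t + 1))) :
    T ≤ potential b w (seq 0) / (ε * δ ^ 2) := by
  have hgrid := forall_inGrid_of_forall_imprStep hstart hstep
  have hdrop := add_nsmul_le_of_forall_add_le (φ := fun t => potential b w (seq t)) fun t ht =>
    (hstep t ht).potential_add_le hε hδ hδ_one hb (fun i => hw i i) hsym hbε hwε (hgrid t ht.le)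
  rw [nsmul_eq_mul] at hdrop
  rw [le_div_iff₀ (by positivity)]
  linarith [potential_nonneg hb hw (seq T)]

end Dynamics

theorem convergence_bound_integer_case_general {n m : ℕ} (hm : 0 < m) {δ : ℝ} (hδ : δ = 1 / m)
    {ε : ℝ} (hε : 0 < ε) {b : ℝ} (hb : 0 ≤ b) {w : Fin n → Fin n → ℝ}
    (hsym : ∀ i j, w i j = w j i) (hw : ∀ i j, 0 ≤ w i j)
    (hbε : b ∈ AddSubgroup.zmultiples ε) (hwε : ∀ i j, w i j ∈ AddSubgroup.zmultiples ε)
    {wmax : ℝ} (hub : ∀ i j, w i j ≤ wmax) :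
    (∀ (T : ℕ) (seq : ℕ → (Fin n → ℝ)), (∀ i, inGrid δ (seq 0 i)) →
      (∀ t, t < T → ImprStep δ b w (seq t) (seq (t + 1))) →
      (T : ℝ) ≤ (4 * b * n + 4 * wmax * n ^ 2) / (ε * δ ^ 2)) ∧
    (∀ x0 : Fin n → ℝ, (∀ i, inGrid δ (x0 i)) →
      ∃ (T : ℕ) (seq : ℕ → (Fin n → ℝ)),
        (T : ℝ) ≤ (4 * b * n + 4 * wmax * n ^ 2) / (ε * δ ^ 2) ∧ seq 0 = x0 ∧
        (∀ t, t < T → ImprStep δ b w (seq t) (seq (t + 1))) ∧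
        NashEq δ b w (seq T)) := by
  have hδ_pos : 0 < δ := by rw [hδ]; positivity
  have hδ_one : (1 : ℝ) ∈ AddSubgroup.zmultiples δ := ⟨m, by simp [hδ, hm.ne']⟩
  have hlength (T : ℕ) (seq : ℕ → Fin n → ℝ) (hstart : ∀ i, inGrid δ (seq 0 i))
      (hstep : ∀ t < T, ImprStep δ b w (seq t) (seq (t + 1))) :
      (T : ℝ) ≤ (4 * b * n + 4 * wmax * n ^ 2) / (ε * δ ^ 2) :=
    (length_le_potential_div hε hδ_pos hδ_one hb hw hsym hbε hwε hstart hstep).trans <| by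
      gcongr
      exact potential_le hb hw hub fun i => (hstart i).1
  refine ⟨hlength, fun x0 hx0 => ?_⟩
  obtain ⟨T, seq, rfl, hstep, hterminal⟩ :=
    exists_seq_to_terminal_of_bddAbove (r := ImprStep δ b w) (x₀ := x0)
      ⟨⌊(4 * b * n + 4 * wmax * n ^ 2) / (ε * δ ^ 2)⌋₊, by
        rintro T ⟨seq, rfl, hstep⟩
        exact Nat.le_floor (hlength T seq hx0 hstep)⟩
  exact ⟨T, seq, hlength T seq hx0 hstep, rfl, hstep, nashEq_iff_forall_not_imprStep.mpr hterminal⟩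

/-- If the influence b and all edge weights are positive integers, every sequence
of asynchronous improvement steps has length at most (4bn + 4·w_max·n²)/δ², and
from any initial profile the asynchronous dynamics reaches a Nash equilibrium
within that many steps. -/
theorem convergence_bound_integer_case
    {n : ℕ} (hn : 2 ≤ n) (m : ℕ) (hm : 2 ≤ m) (δ : ℝ) (hδ : δ = 1 / m)
    (b : ℝ) (hb : 0 < b) (w : Fin n → Fin n → ℝ)
    (hsym : ∀ i j, w i j = w j i) (hdiag : ∀ i, w i i = 0)
    (hw : ∀ i j, 0 ≤ w i j)
    (hbInt : ∃ B : ℕ, 0 < B ∧ (B : ℝ) = b)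
    (hwInt : ∀ i j, ∃ W : ℕ, (W : ℝ) = w i j)
    (wmax : ℝ) (hub : ∀ i j, w i j ≤ wmax) (hatt : ∃ i j, w i j = wmax) :
    (∀ (T : ℕ) (seq : ℕ → (Fin n → ℝ)), (∀ i, inGrid δ (seq 0 i)) →
      (∀ t, t < T → ImprStep δ b w (seq t) (seq (t + 1))) →
      (T : ℝ) ≤ (4 * b * n + 4 * wmax * n ^ 2) / δ ^ 2) ∧
    (∀ x0 : Fin n → ℝ, (∀ i, inGrid δ (x0 i)) →
      ∃ (T : ℕ) (seq : ℕ → (Fin n → ℝ)),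
        (T : ℝ) ≤ (4 * b * n + 4 * wmax * n ^ 2) / δ ^ 2 ∧ seq 0 = x0 ∧
        (∀ t, t < T → ImprStep δ b w (seq t) (seq (t + 1))) ∧
        NashEq δ b w (seq T)) := by
  simpa only [one_mul] using convergence_bound_integer_case_general (by omega) hδ one_pos hb.le
    hsym hw (hbInt.elim fun B hB => ⟨B, by simp [hB.2]⟩)
    (fun i j => (hwInt i j).elim fun W hW => ⟨W, by simp [hW]⟩) hub
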